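/- arXiv:2310.03369 — 5 statements merged into one kernel-verified Lean document; each statement's English description precedes it below -/
import Mathlib

section
/- Let X be a proper geodesic metric space and p ∈ X. Then every point q of the closure of Cut(p) that does not itself belong to Cut(p) is conjugate to p along some geodesic from p to q. -/
open Set Metric Topology Filter
open scoped ENNReal

noncomputable section

namespace InjSoul

/-- The unit interval `[0,1] ⊆ ℝ`. -/
abbrev I01 : Set ℝ := Set.Icc (0 : ℝ) 1

variable {X : Type*} [MetricSpace X]

/-- `0` as a point of `[0,1]`. -/
def pt0 : I01 := ⟨0, by norm_num⟩

/-- `1` as a point of `[0,1]`. -/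
def pt1 : I01 := ⟨1, by norm_num⟩

/-- `c : [0,1] → X` is a geodesic of speed (= length) `L`. -/
def IsGeod (c : C(I01, X)) (L : ℝ) : Prop :=
  0 ≤ L ∧ ∀ s t : I01, dist (c s) (c t) = L * |(s : ℝ) - (t : ℝ)|

/-- `γ : [0,1] → X` is a local geodesic of speed (= length) `L`. -/
def IsLocGeod (γ : C(I01, X)) (L : ℝ) : Prop :=
  0 ≤ L ∧ ∀ t : I01, ∃ ε > 0, ∀ s s' : I01,
    |(s : ℝ) - (t : ℝ)| < ε → |(s' : ℝ) - (t : ℝ)| < ε →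
      dist (γ s) (γ s') = L * |(s : ℝ) - (s' : ℝ)|

/-- `X` is a geodesic space: any two points are joined by a geodesic. -/
def GeodesicSpace (X : Type*) [MetricSpace X] : Prop :=
  ∀ x y : X, ∃ (c : C(I01, X)) (L : ℝ), IsGeod c L ∧ c pt0 = x ∧ c pt1 = y

/-- The cut locus of `p`: all points joined to `p` by at least two distinct geodesics. -/
def Cut (p : X) : Set X :=
  {q | ∃ (γ σ : C(I01, X)) (Lγ Lσ : ℝ), IsGeod γ Lγ ∧ IsGeod σ Lσ ∧
    γ pt0 = p ∧ γ pt1 = q ∧ σ pt0 = p ∧ σ pt1 = q ∧ γ ≠ σ}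

/-- The injectivity radius of `p`, an element of `[0,∞]` (`∞` if `Cut p = ∅`). -/
def inj (p : X) : ℝ≥0∞ := ⨅ q ∈ Cut p, edist p q

/-- The minimal cut locus of `p`: points `γ t₀`, `t₀ ∈ (0,1)`, on a nontrivial local geodesic
`γ` issuing in `p` such that `γ` is minimizing on `[0,t₀]` but on no larger interval `[0,t]`. -/
def MinCut (p : X) : Set X :=
  {q | ∃ (γ : C(I01, X)) (L : ℝ) (t₀ : ℝ) (ht₀ : t₀ ∈ Set.Ioo (0 : ℝ) 1),
      IsLocGeod γ L ∧ 0 < L ∧ γ pt0 = p ∧ γ ⟨t₀, Set.mem_Icc_of_Ioo ht₀⟩ = q ∧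
      dist p q = L * t₀ ∧
      ∀ t : ℝ, ∀ ht : t ∈ Set.Ioc t₀ 1,
        dist p (γ ⟨t, ⟨(ht₀.1.trans ht.1).le, ht.2⟩⟩) ≠ L * t}

/-- The minimal radius of `p`, an element of `[0,∞]` (`∞` if `MinCut p = ∅`). -/
def minRad (p : X) : ℝ≥0∞ := ⨅ q ∈ MinCut p, edist p q

/-- The space `X̃_p` of local geodesics issuing in `p` (including the constant map), viewed
as a subset of the continuous maps `C([0,1], X)` whose metric is the uniform metric `ρ`. -/
def LocGeodFrom (p : X) : Set C(I01, X) := {γ | (∃ L, IsLocGeod γ L) ∧ γ pt0 = p}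

/-- The endpoint map `exp_p : X̃_p → X`, `γ ↦ γ 1`. -/
def endpt : C(I01, X) → X := fun γ => γ pt1

/-- `γ 1` is conjugate to `p = γ 0` along the local geodesic `γ`: no neighborhood `U` of `γ`
in `X̃_p` is mapped homeomorphically onto its image by the endpoint map. -/
def ConjugateAlong (p : X) (γ : C(I01, X)) : Prop :=
  γ ∈ LocGeodFrom p ∧
    ¬ ∃ U : Set C(I01, X), U ⊆ LocGeodFrom p ∧ U ∈ 𝓝[LocGeodFrom p] γ ∧
      Topology.IsEmbedding (U.restrict endpt)

/-- The conjugate radius of `p`: the infimum of lengths of local geodesics issuing in `p`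
along which the endpoint is conjugate to `p` (`∞` if there are none). -/
def conjRad (p : X) : ℝ≥0∞ :=
  sInf {l | ∃ (γ : C(I01, X)) (L : ℝ), IsLocGeod γ L ∧ γ pt0 = p ∧
    ConjugateAlong p γ ∧ l = ENNReal.ofReal L}

/-- The conjugate radius of the space `X`. -/
def conjSpace (X : Type*) [MetricSpace X] : ℝ≥0∞ := ⨅ p : X, conjRad p

/-- Conditions on a function to be a geodesic from `p` to a point of `closedBall q 1`. -/
def GoodFun (p q : X) (f : I01 → X) : Prop :=
  f pt0 = p ∧ f pt1 ∈ closedBall q 1 ∧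
    ∀ s t : I01, dist (f s) (f t) = dist (f pt0) (f pt1) * |(s : ℝ) - (t : ℝ)|

theorem GoodFun.lip {p q : X} {f : I01 → X} (hf : GoodFun p q f) :
    LipschitzWith (Real.toNNReal (dist p q + 1)) f := by
  obtain ⟨h0, h1, h⟩ := hf
  refine LipschitzWith.of_dist_le_mul fun s t => ?_
  have hd : dist (f pt0) (f pt1) ≤ dist p q + 1 := by
    rw [h0]
    have := dist_triangle p q (f pt1)
    rw [mem_closedBall, dist_comm] at h1
    linarith
  rw [h s t, Real.coe_toNNReal _ (by positivity), Subtype.dist_eq, Real.dist_eq]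
  gcongr

theorem isCompact_good [ProperSpace X] (p q : X) :
    IsCompact {c : C(I01, X) | GoodFun p q c} := by
  apply ArzelaAscoli.isCompact_of_equicontinuous
  · have himg : ContinuousMap.toFun '' {c : C(I01, X) | GoodFun p q c}
        = {f : I01 → X | GoodFun p q f} := by
      ext f
      constructor
      · rintro ⟨c, hc, rfl⟩
        exact hc
      · intro hf
        exact ⟨⟨f, (GoodFun.lip hf).continuous⟩, hf, rfl⟩
    rw [himg]
    refine IsCompact.of_isClosed_subset
      (isCompact_univ_pi (fun _ : I01 => isCompact_closedBall p (dist p q + 1))) ?_ ?_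
    · simp only [GoodFun, setOf_and, setOf_forall]
      refine IsClosed.inter ?_ (IsClosed.inter ?_ ?_)
      · exact isClosed_eq (by fun_prop) (by fun_prop)
      · exact isClosed_closedBall.preimage (continuous_apply pt1)
      · exact isClosed_iInter fun s => isClosed_iInter fun t =>
          isClosed_eq (by fun_prop) (by fun_prop)
    · intro f hf s _
      have h := (GoodFun.lip hf).dist_le_mul s pt0
      rw [Real.coe_toNNReal _ (by positivity), hf.1, Subtype.dist_eq, Real.dist_eq] at h
      have hs : |(s : ℝ) - (pt0 : I01)| ≤ 1 := by
        simp only [pt0, sub_zero]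
        rw [abs_of_nonneg s.2.1]
        exact s.2.2
      rw [mem_closedBall]
      have : (0 : ℝ) ≤ dist p q + 1 := by positivity
      nlinarith
  · exact (LipschitzWith.uniformEquicontinuous _ _
      (fun c : {c : C(I01, X) | GoodFun p q c} => GoodFun.lip c.2)).equicontinuous

theorem IsGeod.dist_eq {c : C(I01, X)} {L : ℝ} (h : IsGeod c L) :
    dist (c pt0) (c pt1) = L := by
  rw [h.2]; simp [pt0, pt1]

theorem IsGeod.good {p q : X} {c : C(I01, X)} {L : ℝ} (h : IsGeod c L) (h0 : c pt0 = p)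
    (h1 : c pt1 ∈ closedBall q 1) : GoodFun p q c :=
  ⟨h0, h1, fun s t => by rw [h.dist_eq, h.2]⟩

theorem GoodFun.isGeod {p q : X} {c : C(I01, X)} (h : GoodFun p q c) :
    IsGeod c (dist (c pt0) (c pt1)) := ⟨dist_nonneg, h.2.2⟩

theorem IsGeod.mem_locGeodFrom {p : X} {c : C(I01, X)} {L : ℝ} (h : IsGeod c L)
    (h0 : c pt0 = p) : c ∈ LocGeodFrom p :=
  ⟨⟨L, h.1, fun _ => ⟨1, one_pos, fun s s' _ _ => h.2 s s'⟩⟩, h0⟩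

/-- In a proper geodesic metric space, every point of `closure (Cut p)` that
is not itself in `Cut p` is conjugate to `p` along some geodesic from `p` to it. -/
theorem conjugate_of_mem_closure_cut_not_cut {X : Type*} [MetricSpace X] [ProperSpace X]
    (hgeo : GeodesicSpace X) (p q : X) (hq : q ∈ closure (Cut p) \ Cut p) :
    ∃ (γ : C(I01, X)) (L : ℝ), IsGeod γ L ∧ γ pt0 = p ∧ γ pt1 = q ∧
      ConjugateAlong p γ := by
  obtain ⟨hcl, hnc⟩ := hq
  obtain ⟨γ, L, hγ, hγ0, hγ1⟩ := hgeo p q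
  refine ⟨γ, L, hγ, hγ0, hγ1, hγ.mem_locGeodFrom hγ0, ?_⟩
  rintro ⟨U, -, hU, hemb⟩
  obtain ⟨V, hVo, hγV, hVU⟩ := mem_nhdsWithin.1 hU
  have hcont : Continuous (endpt : C(I01, X) → X) := by
    unfold endpt
    fun_prop
  have hK : IsCompact (endpt '' ({c : C(I01, X) | GoodFun p q c} \ V)) :=
    ((isCompact_good p q).diff hVo).image hcont
  have hqK : q ∉ endpt '' ({c : C(I01, X) | GoodFun p q c} \ V) := by
    rintro ⟨c, ⟨hc, hcV⟩, hcq⟩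
    apply hnc
    refine ⟨c, γ, _, L, hc.isGeod, hγ, hc.1, hcq, hγ0, hγ1, ?_⟩
    rintro rfl
    exact hcV hγV
  have hN : ball q 1 ∩ (endpt '' ({c : C(I01, X) | GoodFun p q c} \ V))ᶜ ∈ 𝓝 q :=
    inter_mem (ball_mem_nhds q one_pos) (hK.isClosed.isOpen_compl.mem_nhds hqK)
  obtain ⟨x, ⟨hxb, hxK⟩, a, b, La, Lb, ha, hb, ha0, ha1, hb0, hb1, hab⟩ :=
    mem_closure_iff_nhds.1 hcl _ hN
  have key : ∀ (c : C(I01, X)) (l : ℝ), IsGeod c l → c pt0 = p → c pt1 = x → c ∈ U := by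
    intro c l hc h0 h1
    refine hVU ⟨?_, hc.mem_locGeodFrom h0⟩
    by_contra hcV
    exact hxK ⟨c, ⟨hc.good h0 (h1 ▸ ball_subset_closedBall hxb), hcV⟩, h1⟩
  have heq := @hemb.injective ⟨a, key a La ha ha0 ha1⟩ ⟨b, key b Lb hb hb0 hb1⟩
    (ha1.trans hb1.symm)
  exact hab (congrArg Subtype.val heq)

end InjSoul
end
end

section
/- Let X be a proper geodesic metric space and p ∈ X. Then every point of MinCut(p) that is not in Cut(p) is conjugate to p along some geodesic from p. -/
open Set Metric Topology Filter
open scoped ENNReal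

noncomputable section

namespace InjSoul

variable {X : Type*} [MetricSpace X]

/-- A local geodesic of speed `L` is `L`-Lipschitz. -/
lemma locGeod_lip {γ : C(I01, X)} {L : ℝ} (h : IsLocGeod γ L) (a b : I01) :
    dist (γ a) (γ b) ≤ L * |(a : ℝ) - (b : ℝ)| := by
  wlog hab : (a : ℝ) ≤ b generalizing a b with H
  · rw [dist_comm, abs_sub_comm]
    exact H b a (le_of_not_ge hab)
  let g : ℝ → X := fun t => γ (Set.projIcc 0 1 zero_le_one t)
  have hg : Continuous g := γ.continuous.comp continuous_projIcc
  let S : Set ℝ := {t | dist (g a) (g t) ≤ L * (t - a)}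
  have hS : IsClosed S := isClosed_le (by fun_prop) (by fun_prop)
  have key : Set.Icc (a : ℝ) b ⊆ S := by
    apply IsClosed.Icc_subset_of_forall_mem_nhdsWithin
    · exact hS.inter isClosed_Icc
    · simp [S]
    · rintro x ⟨hx, hxa, hxb⟩
      have hx01 : x ∈ I01 := ⟨a.2.1.trans hxa, hxb.le.trans b.2.2⟩
      obtain ⟨ε, hε, H⟩ := h.2 ⟨x, hx01⟩
      have hlt : x < min (x + ε) b := lt_min (by linarith) hxb
      filter_upwards [Ioo_mem_nhdsGT hlt] with y hy
      have hy1 : y < x + ε := hy.2.trans_le (min_le_left _ _)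
      have hy2 : y < b := hy.2.trans_le (min_le_right _ _)
      have hyx := hy.1
      have hy01 : y ∈ I01 := ⟨hx01.1.trans hyx.le, hy2.le.trans b.2.2⟩
      have e := H ⟨x, hx01⟩ ⟨y, hy01⟩ (by simpa using hε)
        (by simp only; rw [abs_of_pos] <;> linarith)
      have gx : g x = γ ⟨x, hx01⟩ := by simp only [g]; rw [Set.projIcc_of_mem _ hx01]
      have gy : g y = γ ⟨y, hy01⟩ := by simp only [g]; rw [Set.projIcc_of_mem _ hy01]
      have hx' : dist (g a) (g x) ≤ L * (x - a) := hx
      change dist (g a) (g y) ≤ L * (y - a)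
      have e' : dist (g x) (g y) = L * (y - x) := by
        rw [gx, gy, e]; simp only; rw [abs_sub_comm, abs_of_pos]; linarith
      have := dist_triangle (g a) (g x) (g y)
      nlinarith
  have hb : dist (g a) (g b) ≤ L * (b - a) := key ⟨hab, le_rfl⟩
  have ga : g a = γ a := by simp [g]
  have gb : g b = γ b := by simp [g]
  rw [ga, gb] at hb
  rw [abs_sub_comm, abs_of_nonneg (by linarith)]
  exact hb

/-- The restriction of `γ` to `[0,t]`, reparametrized on `[0,1]`. -/
def repar (γ : C(I01, X)) (t : I01) : C(I01, X) :=
  ⟨fun s => γ (t * s), by fun_prop⟩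

lemma repar_apply (γ : C(I01, X)) (t s : I01) : repar γ t s = γ (t * s) := rfl

lemma repar_pt0 (γ : C(I01, X)) (t : I01) : repar γ t pt0 = γ pt0 := by
  rw [repar_apply]; congr 1; apply Subtype.ext; simp [pt0]

lemma repar_pt1 (γ : C(I01, X)) (t : I01) : repar γ t pt1 = γ t := by
  rw [repar_apply]; congr 1; apply Subtype.ext; simp [pt1]

lemma abs_mul_sub (t s s' : I01) :
    |((t * s : I01) : ℝ) - ((t * s' : I01) : ℝ)| = (t : ℝ) * |(s : ℝ) - s'| := by
  rw [Set.Icc.coe_mul, Set.Icc.coe_mul, ← mul_sub, abs_mul, abs_of_nonneg t.2.1]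

lemma repar_locGeod {γ : C(I01, X)} {L : ℝ} (h : IsLocGeod γ L) (t : I01) :
    IsLocGeod (repar γ t) (L * t) := by
  refine ⟨mul_nonneg h.1 t.2.1, fun u => ?_⟩
  obtain ⟨ε, hε, H⟩ := h.2 (t * u)
  have aux : ∀ s : I01, |(s : ℝ) - u| < ε → |((t * s : I01) : ℝ) - ((t * u : I01) : ℝ)| < ε := by
    intro s hs
    rw [abs_mul_sub]
    exact (mul_le_of_le_one_left (abs_nonneg _) t.2.2).trans_lt hs
  refine ⟨ε, hε, fun s s' hs hs' => ?_⟩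
  rw [repar_apply, repar_apply, H _ _ (aux s hs) (aux s' hs'), abs_mul_sub, mul_assoc]

lemma repar_dist {γ : C(I01, X)} {L : ℝ} (h : IsLocGeod γ L) (t t' : I01) :
    dist (repar γ t) (repar γ t') ≤ L * |(t : ℝ) - t'| := by
  rw [ContinuousMap.dist_le (mul_nonneg h.1 (abs_nonneg _))]
  intro s
  rw [repar_apply, repar_apply, mul_comm t, mul_comm t']
  refine (locGeod_lip h _ _).trans (mul_le_mul_of_nonneg_left ?_ h.1)
  rw [abs_mul_sub]
  exact mul_le_of_le_one_left (abs_nonneg _) s.2.2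

lemma IsGeod.isLocGeod {c : C(I01, X)} {L : ℝ} (h : IsGeod c L) : IsLocGeod c L :=
  ⟨h.1, fun _ => ⟨1, one_pos, fun s s' _ _ => h.2 s s'⟩⟩

/-- A Lipschitz curve realizing the distance of its endpoints is a geodesic. -/
lemma isGeod_of_lip {c : C(I01, X)} {L : ℝ} (hL : 0 ≤ L)
    (h : ∀ s t : I01, dist (c s) (c t) ≤ L * |(s : ℝ) - t|)
    (h1 : dist (c pt0) (c pt1) = L) : IsGeod c L := by
  refine ⟨hL, fun s t => ?_⟩
  wlog hst : (s : ℝ) ≤ t generalizing s t with H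
  · rw [dist_comm, abs_sub_comm]
    exact H t s (le_of_not_ge hst)
  refine le_antisymm (h s t) ?_
  have e1 := h pt0 s
  have e2 := h t pt1
  have e3 := dist_triangle4 (c pt0) (c s) (c t) (c pt1)
  have a1 : |((pt0 : I01) : ℝ) - s| = s := by
    simp only [pt0, zero_sub, abs_neg]; exact abs_of_nonneg s.2.1
  have a2 : |(t : ℝ) - (pt1 : I01)| = 1 - t := by
    simp only [pt1]; rw [abs_sub_comm]; exact abs_of_nonneg (by linarith [t.2.2])
  have a3 : |(s : ℝ) - t| = t - s := by
    rw [abs_sub_comm]; exact abs_of_nonneg (by linarith)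
  rw [a1] at e1; rw [a2] at e2; rw [a3]
  nlinarith

/-- The speed of a local geodesic is unique. -/
lemma locGeod_speed_unique {γ : C(I01, X)} {L L' : ℝ} (h : IsLocGeod γ L) (h' : IsLocGeod γ L') :
    L = L' := by
  obtain ⟨ε, hε, H⟩ := h.2 pt0
  obtain ⟨ε', hε', H'⟩ := h'.2 pt0
  have hδ : 0 < min (min ε ε') 1 := by positivity
  obtain ⟨δ, hδ0, hδ1⟩ := exists_between hδ
  have d1 : δ < ε := hδ1.trans_le ((min_le_left _ _).trans (min_le_left _ _))
  have d2 : δ < ε' := hδ1.trans_le ((min_le_left _ _).trans (min_le_right _ _))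
  have d3 : δ < 1 := hδ1.trans_le (min_le_right _ _)
  have e1 := H pt0 ⟨δ, hδ0.le, d3.le⟩ (by simpa using hε)
    (by simpa [pt0, abs_of_pos hδ0] using d1)
  have e2 := H' pt0 ⟨δ, hδ0.le, d3.le⟩ (by simpa using hε')
    (by simpa [pt0, abs_of_pos hδ0] using d2)
  rw [e1] at e2
  simp only [pt0, zero_sub, abs_neg, abs_of_pos hδ0] at e2
  exact mul_right_cancel₀ hδ0.ne' e2

lemma isCompact_lip [ProperSpace X] (p : X) (M : ℝ) (hM : 0 ≤ M) :
    IsCompact {f : C(I01, X) | f pt0 = p ∧ ∀ s t : I01, dist (f s) (f t) ≤ M * |(s : ℝ) - t|} := by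
  apply ArzelaAscoli.isCompact_of_equicontinuous
  · have himg : ContinuousMap.toFun ''
        {f : C(I01, X) | f pt0 = p ∧ ∀ s t : I01, dist (f s) (f t) ≤ M * |(s : ℝ) - t|} =
        {f : I01 → X | f pt0 = p ∧ ∀ s t : I01, dist (f s) (f t) ≤ M * |(s : ℝ) - t|} := by
      ext f
      constructor
      · rintro ⟨g, hg, rfl⟩; exact hg
      · intro hf
        have hc : Continuous f := by
          refine (LipschitzWith.of_dist_le_mul (K := ⟨M, hM⟩) fun s t => ?_).continuous
          exact hf.2 s t
        exact ⟨⟨f, hc⟩, hf, rfl⟩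
    rw [himg]
    refine IsCompact.of_isClosed_subset
      (isCompact_univ_pi (fun _ : I01 => isCompact_closedBall p M)) ?_ ?_
    · apply IsClosed.inter
      · exact isClosed_eq (continuous_apply _) continuous_const
      · change IsClosed {f : I01 → X | ∀ s t : I01, dist (f s) (f t) ≤ M * |(s : ℝ) - t|}
        simp only [Set.setOf_forall]
        refine isClosed_iInter fun s => isClosed_iInter fun t => ?_
        exact isClosed_le ((continuous_apply s).dist (continuous_apply t)) continuous_const
    · rintro f ⟨h0, hf⟩ s -
      rw [mem_closedBall, ← h0]
      refine (hf s pt0).trans (mul_le_of_le_one_right hM ?_)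
      simp only [pt0, sub_zero]
      rw [abs_of_nonneg s.2.1]; exact s.2.2
  · refine (LipschitzWith.uniformEquicontinuous _ ⟨M, hM⟩ ?_).equicontinuous
    rintro ⟨f, hf⟩
    exact LipschitzWith.of_dist_le_mul fun s t => hf.2 s t

/-- In a proper geodesic metric space, every point of `MinCut p` that is not
in `Cut p` is conjugate to `p` along some geodesic from `p`. -/
theorem conjugate_of_mem_minCut_not_cut {X : Type*} [MetricSpace X] [ProperSpace X]
    (hgeo : GeodesicSpace X) (p q : X) (hq : q ∈ MinCut p \ Cut p) :
    ∃ (γ : C(I01, X)) (L : ℝ), IsGeod γ L ∧ γ pt0 = p ∧ γ pt1 = q ∧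
      ConjugateAlong p γ := by
  obtain ⟨⟨γ, L, t₀, ht₀, hγ, hL, hγ0, hγq, hd, hne⟩, hcut⟩ := hq
  let T₀ : I01 := ⟨t₀, Set.mem_Icc_of_Ioo ht₀⟩
  have hT₀ : γ T₀ = q := hγq
  have hc0 : repar γ T₀ pt0 = p := by rw [repar_pt0, hγ0]
  have hc1 : repar γ T₀ pt1 = q := by rw [repar_pt1, hT₀]
  have hcloc := repar_locGeod hγ T₀
  have hc : IsGeod (repar γ T₀) (L * t₀) :=
    isGeod_of_lip hcloc.1 (locGeod_lip hcloc) (by rw [hc0, hc1, hd])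
  refine ⟨repar γ T₀, L * t₀, hc, hc0, hc1, ⟨⟨_, hcloc⟩, hc0⟩, ?_⟩
  rintro ⟨U, -, hU, hemb⟩
  -- parameters tending to `t₀` from the right
  have htn : ∀ n : ℕ, t₀ + (1 - t₀) * (1 / ((n : ℝ) + 1)) ∈ Set.Ioc t₀ 1 := by
    intro n
    have h1 : 0 < 1 - t₀ := by linarith [ht₀.2]
    have h2 : 0 < 1 / ((n : ℝ) + 1) := by positivity
    have h3 : 1 / ((n : ℝ) + 1) ≤ 1 := by
      rw [div_le_one (by positivity)]; linarith [Nat.cast_nonneg (α := ℝ) n]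
    constructor
    · nlinarith
    · nlinarith
  let T : ℕ → I01 := fun n => ⟨t₀ + (1 - t₀) * (1 / ((n : ℝ) + 1)),
    (ht₀.1.trans (htn n).1).le, (htn n).2⟩
  have hTlim : Tendsto T atTop (𝓝 T₀) := by
    rw [tendsto_subtype_rng]
    have := (tendsto_one_div_add_atTop_nhds_zero_nat (𝕜 := ℝ)).const_mul (1 - t₀)
    simpa [T, T₀] using this.const_add t₀
  have hTne : ∀ n, dist p (γ (T n)) ≠ L * (T n : ℝ) := fun n => hne _ (htn n)
  have hγlim : Tendsto (fun n => repar γ (T n)) atTop (𝓝 (repar γ T₀)) := by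
    rw [tendsto_iff_dist_tendsto_zero]
    refine squeeze_zero (fun _ => dist_nonneg) (fun n => repar_dist hγ (T n) T₀) ?_
    have h1 : Tendsto (fun n => (T n : ℝ)) atTop (𝓝 (T₀ : ℝ)) :=
      (continuous_subtype_val.tendsto _).comp hTlim
    simpa using ((h1.sub_const (T₀ : ℝ)).abs).const_mul L
  -- minimizing geodesics
  choose c l hcg hcp hcq using fun n => hgeo p (γ (T n))
  have hl : ∀ n, l n = dist p (γ (T n)) := by
    intro n
    have := (hcg n).2 pt0 pt1
    rw [hcp, hcq] at this
    simpa [pt0, pt1] using this.symm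
  have hlL : ∀ n, l n ≤ L := by
    intro n
    rw [hl, ← hγ0]
    refine (locGeod_lip hγ _ _).trans (mul_le_of_le_one_right hγ.1 ?_)
    simp only [pt0, zero_sub, abs_neg]
    rw [abs_of_nonneg (T n).2.1]; exact (T n).2.2
  obtain ⟨a, -, φ, hφ, ha⟩ := (isCompact_lip p L hL.le).tendsto_subseq (x := c)
    (fun n => ⟨hcp n, fun s t => by
      rw [(hcg n).2]; exact mul_le_mul_of_nonneg_right (hlL n) (abs_nonneg _)⟩)
  have hev : ∀ s, Tendsto (fun n => c (φ n) s) atTop (𝓝 (a s)) := fun s =>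
    ((continuous_eval_const s).tendsto a).comp ha
  have hγT : Tendsto (fun n => γ (T (φ n))) atTop (𝓝 q) := by
    rw [← hT₀]
    exact (γ.continuous.tendsto _).comp (hTlim.comp hφ.tendsto_atTop)
  have ha0 : a pt0 = p := tendsto_nhds_unique (hev pt0) (by simp only [hcp]; exact tendsto_const_nhds)
  have ha1 : a pt1 = q := tendsto_nhds_unique (hev pt1) (by simpa only [hcq] using hγT)
  have hag : IsGeod a (dist p q) := by
    refine ⟨dist_nonneg, fun s t => ?_⟩
    refine tendsto_nhds_unique ((hev s).dist (hev t)) ?_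
    simp only [(hcg _).2, hl]
    exact (tendsto_const_nhds.dist hγT).mul_const _
  have hac : a = repar γ T₀ := by
    by_contra hac
    exact hcut ⟨a, repar γ T₀, _, _, hag, hc, ha0, ha1, hc0, hc1, hac⟩
  rw [hac] at ha
  have ev1 : ∀ᶠ n in atTop, c (φ n) ∈ U :=
    ((tendsto_nhdsWithin_iff (s := LocGeodFrom p)).2 ⟨ha, Eventually.of_forall fun n =>
      ⟨⟨_, (hcg (φ n)).isLocGeod⟩, hcp _⟩⟩).eventually hU
  have ev2 : ∀ᶠ n in atTop, repar γ (T (φ n)) ∈ U :=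
    ((tendsto_nhdsWithin_iff (s := LocGeodFrom p)).2 ⟨hγlim.comp hφ.tendsto_atTop, Eventually.of_forall fun n =>
      ⟨⟨_, repar_locGeod hγ _⟩, (repar_pt0 _ _).trans hγ0⟩⟩).eventually hU
  obtain ⟨n, h1, h2⟩ := (ev1.and ev2).exists
  have heq : (⟨c (φ n), h1⟩ : U) = ⟨repar γ (T (φ n)), h2⟩ := by
    apply hemb.injective
    change c (φ n) pt1 = repar γ (T (φ n)) pt1
    rw [hcq, repar_pt1]
  have heq' : c (φ n) = repar γ (T (φ n)) := congrArg Subtype.val heq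
  have hloc := (hcg (φ n)).isLocGeod
  rw [heq'] at hloc
  have := locGeod_speed_unique hloc (repar_locGeod hγ _)
  rw [hl] at this
  exact hTne _ this

end InjSoul
end
end

section
/- Let X be a proper geodesic metric space and p ∈ X. If inj(p) < conj(X) or MinRad(p) < conj(X), then inj(p) ≤ MinRad(p). -/
open Set Metric Topology Filter
open scoped ENNReal

noncomputable section

namespace InjSoul

variable {X : Type*} [MetricSpace X]

theorem aux_lip {X : Type*} [MetricSpace X] {γ : C(I01, X)} {L : ℝ} (h : IsLocGeod γ L)
    (s t : I01) : dist (γ s) (γ t) ≤ L * |(s : ℝ) - (t : ℝ)| := by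
  have key : ∀ s t : I01, (s : ℝ) ≤ t → dist (γ s) (γ t) ≤ L * ((t : ℝ) - s) := by
    intro s t hst
    let g : ℝ → X := fun x => γ (Set.projIcc (0 : ℝ) 1 zero_le_one x)
    have hg : Continuous g := γ.continuous.comp continuous_projIcc
    have hgv : ∀ x : I01, g x = γ x := fun x => by simp [g]
    let A : Set ℝ := {x | dist (γ s) (g x) ≤ L * (x - s)}
    have hA : IsClosed A := isClosed_le (by fun_prop) (by fun_prop)
    have hsub : Set.Icc (s : ℝ) t ⊆ A := by
      refine IsClosed.Icc_subset_of_forall_exists_gt (hA.inter isClosed_Icc) ?_ ?_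
      · simp [A, hgv]
      · intro x hx y hy
        obtain ⟨hxA, hx1, hx2⟩ := hx
        have hy' : x < y := hy
        have hx0 : 0 ≤ x := s.2.1.trans hx1
        have hx1' : x < 1 := hx2.trans_le t.2.2
        obtain ⟨ε, hε, H⟩ := h.2 ⟨x, hx0, hx1'.le⟩
        let z : ℝ := min (min y 1) (x + ε / 2)
        have hz1 : x < z := lt_min (lt_min hy' hx1') (by linarith)
        have hzy : z ≤ y := (min_le_left _ _).trans (min_le_left _ _)
        have hz2 : z ≤ 1 := (min_le_left _ _).trans (min_le_right _ _)
        have hz3 : z ≤ x + ε / 2 := min_le_right _ _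
        refine ⟨z, ?_, hz1, hzy⟩
        have := H ⟨x, hx0, hx1'.le⟩ ⟨z, hx0.trans hz1.le, hz2⟩ (by simpa using hε)
          (by simp only; rw [abs_of_pos (by linarith)]; linarith)
        simp only at this
        rw [← hgv, ← hgv, abs_sub_comm, abs_of_pos (by linarith)] at this
        have hxA' : dist (γ s) (g x) ≤ L * (x - s) := hxA
        change dist (γ s) (g z) ≤ L * (z - s)
        have := dist_triangle (γ s) (g x) (g z)
        simp only at *
        linarith
    have := hsub (Set.right_mem_Icc.2 hst)
    simpa [A, hgv] using this
  rcases le_total (s : ℝ) t with hst | hst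
  · rw [abs_sub_comm, abs_of_nonneg (by linarith)]; exact key s t hst
  · rw [dist_comm, abs_of_nonneg (by linarith)]; exact key t s hst

/-- The reparametrized restriction of `γ` to `[0,τ]`, continuous in `τ`. -/
def aux_rest {X : Type*} [MetricSpace X] (γ : C(I01, X)) : C(I01, C(I01, X)) :=
  (γ.comp (⟨fun q : I01 × I01 => q.1 * q.2, by fun_prop⟩ : C(I01 × I01, I01))).curry

theorem aux_rest_apply {X : Type*} [MetricSpace X] (γ : C(I01, X)) (τ s : I01) :
    aux_rest γ τ s = γ (τ * s) := rfl

theorem aux_rest_pt0 {X : Type*} [MetricSpace X] (γ : C(I01, X)) (τ : I01) :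
    aux_rest γ τ pt0 = γ pt0 := by
  rw [aux_rest_apply]; congr 1; ext; simp [pt0]

theorem aux_rest_pt1 {X : Type*} [MetricSpace X] (γ : C(I01, X)) (τ : I01) :
    aux_rest γ τ pt1 = γ τ := by
  rw [aux_rest_apply]; congr 1; ext; simp [pt1]

theorem aux_rest_loc {X : Type*} [MetricSpace X] {γ : C(I01, X)} {L : ℝ} (h : IsLocGeod γ L)
    (τ : I01) : IsLocGeod (aux_rest γ τ) (L * τ) := by
  have h0 := τ.2.1
  have h1 := τ.2.2
  refine ⟨mul_nonneg h.1 h0, fun t => ?_⟩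
  obtain ⟨ε, hε, H⟩ := h.2 (τ * t)
  have aux : ∀ a b : I01, |((τ * a : I01) : ℝ) - ((τ * b : I01) : ℝ)| = τ * |(a : ℝ) - b| := by
    intro a b
    rw [Set.Icc.coe_mul, Set.Icc.coe_mul, ← mul_sub, abs_mul, abs_of_nonneg h0]
  refine ⟨ε, hε, fun s s' hs hs' => ?_⟩
  rw [aux_rest_apply, aux_rest_apply, H, aux, mul_assoc]
  · rw [aux]; exact (mul_le_of_le_one_left (abs_nonneg _) h1).trans_lt hs
  · rw [aux]; exact (mul_le_of_le_one_left (abs_nonneg _) h1).trans_lt hs'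

theorem aux_geod {X : Type*} [MetricSpace X] {γ : C(I01, X)} {L : ℝ} (h : IsLocGeod γ L)
    (hd : dist (γ pt0) (γ pt1) = L) : IsGeod γ L := by
  have key : ∀ s t : I01, (s : ℝ) ≤ t → dist (γ s) (γ t) = L * ((t : ℝ) - s) := by
    intro s t hst
    have a := aux_lip h pt0 s
    have b := aux_lip h s t
    have c := aux_lip h t pt1
    have d := dist_triangle4 (γ pt0) (γ s) (γ t) (γ pt1)
    have hs := s.2.1
    have ht := t.2.2
    rw [abs_sub_comm, abs_of_nonneg (by simpa [pt0] using hs)] at a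
    rw [abs_sub_comm, abs_of_nonneg (by linarith)] at b
    rw [abs_sub_comm, abs_of_nonneg (by simpa [pt1] using ht)] at c
    simp only [pt0, pt1] at *
    linarith
  refine ⟨h.1, fun s t => ?_⟩
  rcases le_total (s : ℝ) t with hst | hst
  · rw [abs_sub_comm, abs_of_nonneg (by linarith)]; exact key s t hst
  · rw [dist_comm, abs_of_nonneg (by linarith)]; exact key t s hst

theorem aux_geod_loc {X : Type*} [MetricSpace X] {γ : C(I01, X)} {L : ℝ} (h : IsGeod γ L) :
    IsLocGeod γ L :=
  ⟨h.1, fun _ => ⟨1, one_pos, fun s s' _ _ => h.2 s s'⟩⟩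

theorem aux_speed {X : Type*} [MetricSpace X] {γ : C(I01, X)} {L M : ℝ} (h : IsGeod γ L)
    (h' : IsLocGeod γ M) : L = M := by
  obtain ⟨ε, hε, H⟩ := h'.2 pt0
  let z : ℝ := min 1 (ε / 2)
  have hz0 : 0 < z := lt_min one_pos (by linarith)
  have hz1 : z ≤ 1 := min_le_left _ _
  have hz2 : z ≤ ε / 2 := min_le_right _ _
  have a := H pt0 ⟨z, hz0.le, hz1⟩ (by simpa using hε)
    (by simp only [pt0, sub_zero, abs_of_pos hz0]; linarith)
  rw [h.2] at a
  simp only [pt0, zero_sub, abs_neg, abs_of_pos hz0] at a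
  exact mul_right_cancel₀ hz0.ne' a

theorem aux_geod_len {X : Type*} [MetricSpace X] {γ : C(I01, X)} {L : ℝ} (h : IsGeod γ L) :
    dist (γ pt0) (γ pt1) = L := by
  rw [h.2]; simp [pt0, pt1]

theorem aux_compact {X : Type*} [MetricSpace X] [ProperSpace X] (p : X) (M : ℝ) :
    IsCompact {c : C(I01, X) | c pt0 = p ∧ ∀ s t : I01, dist (c s) (c t) ≤ M * |(s : ℝ) - t|} := by
  apply ArzelaAscoli.isCompact_of_equicontinuous
  · have himg : ContinuousMap.toFun '' {c : C(I01, X) | c pt0 = p ∧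
        ∀ s t : I01, dist (c s) (c t) ≤ M * |(s : ℝ) - t|} =
        {f : I01 → X | f pt0 = p ∧ ∀ s t : I01, dist (f s) (f t) ≤ M * |(s : ℝ) - t|} := by
      ext f
      constructor
      · rintro ⟨c, hc, rfl⟩; exact hc
      · intro hf
        have : LipschitzWith M.toNNReal f := by
          refine LipschitzWith.of_dist_le_mul fun s t => (hf.2 s t).trans ?_
          rw [Subtype.dist_eq, Real.dist_eq]
          exact mul_le_mul_of_nonneg_right (Real.le_coe_toNNReal M) (abs_nonneg _)
        exact ⟨⟨f, this.continuous⟩, hf, rfl⟩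
    rw [himg]
    refine IsCompact.of_isClosed_subset
      (isCompact_univ_pi fun _ : I01 => isCompact_closedBall p (max M 0)) ?_ ?_
    · simp only [Set.ofPred_and, Set.ofPred_forall]
      refine IsClosed.inter (isClosed_eq (by fun_prop) (by fun_prop)) ?_
      exact isClosed_iInter fun s => isClosed_iInter fun t =>
        isClosed_le (by fun_prop) (by fun_prop)
    · intro f hf s _
      rw [mem_closedBall, ← hf.1]
      refine (hf.2 s pt0).trans ?_
      have h0 := s.2.1
      have h1 := s.2.2
      simp only [pt0, sub_zero, abs_of_nonneg h0]
      have := mul_le_mul_of_nonneg_right (le_max_left M 0) h0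
      have := mul_le_of_le_one_right (le_max_right M 0) h1
      linarith
  · refine Metric.equicontinuous_of_continuity_modulus (fun x => M * x) ?_ _ ?_
    · have : Continuous fun x : ℝ => M * x := by fun_prop
      simpa using this.tendsto 0
    · intro s t c
      exact c.2.2 s t

theorem aux_main {X : Type*} [MetricSpace X] [ProperSpace X]
    (hgeo : GeodesicSpace X) (p q : X) (hq : q ∈ MinCut p) (hc : q ∉ Cut p) :
    conjSpace X ≤ edist p q := by
  obtain ⟨γ, L, t₀, ht₀, hγ, hL, h0, hγq, hd, hne⟩ := hq
  set τ : I01 := ⟨t₀, Set.mem_Icc_of_Ioo ht₀⟩ with hτ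
  have hloc := aux_rest_loc hγ τ
  have hconj : ConjugateAlong p (aux_rest γ τ) := by
    refine ⟨⟨⟨_, hloc⟩, by rw [aux_rest_pt0, h0]⟩, ?_⟩
    rintro ⟨U, hU, hUn, hemb⟩
    have hrgeod : IsGeod (aux_rest γ τ) (L * τ) := by
      apply aux_geod hloc
      rw [aux_rest_pt0, aux_rest_pt1, h0, hγq, hd]
    -- the sequence of times
    have hu : ∀ n : ℕ, t₀ < t₀ + (1 - t₀) / (n + 1) ∧ t₀ + (1 - t₀) / (n + 1) ≤ 1 := by
      intro n
      have h1 : 0 < 1 - t₀ := by linarith [ht₀.2]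
      have h2 : (0 : ℝ) < n + 1 := by positivity
      have h3 : (1 - t₀) / (n + 1) ≤ 1 - t₀ := div_le_self h1.le (by linarith)
      have h4 := div_pos h1 h2
      constructor <;> linarith
    let u : ℕ → I01 := fun n => ⟨t₀ + (1 - t₀) / (n + 1), ht₀.1.le.trans (hu n).1.le, (hu n).2⟩
    have hut : Tendsto u atTop (𝓝 τ) := by
      rw [tendsto_subtype_rng]
      have : Tendsto (fun n : ℕ => t₀ + (1 - t₀) * (1 / ((n : ℝ) + 1))) atTop
          (𝓝 (t₀ + (1 - t₀) * 0)) :=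
        (tendsto_one_div_add_atTop_nhds_zero_nat.const_mul _).const_add _
      simpa [u, hτ, div_eq_mul_inv] using this
    have hud : ∀ n, dist p (γ (u n)) ≠ L * u n := fun n => hne _ ⟨(hu n).1, (hu n).2⟩
    choose c M hcM hcp hcq using fun n => hgeo p (γ (u n))
    have hML : ∀ n, M n = dist p (γ (u n)) := fun n => by
      rw [← aux_geod_len (hcM n), hcp, hcq]
    have hMle : ∀ n, M n ≤ L := fun n => by
      have := aux_lip hγ pt0 (u n)
      rw [hML, ← h0]
      refine this.trans (mul_le_of_le_one_right hL.le ?_)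
      have h1 := (u n).2.1
      have h2 := (u n).2.2
      simp only [pt0, zero_sub, abs_neg]
      rwa [abs_of_nonneg h1]
    obtain ⟨c', -, φ, hφ, hlim⟩ := (aux_compact p L).tendsto_subseq (x := c) fun n =>
      ⟨hcp n, fun s t => by
        rw [(hcM n).2]; exact mul_le_mul_of_nonneg_right (hMle n) (abs_nonneg _)⟩
    have hev : ∀ s : I01, Tendsto (fun n => c (φ n) s) atTop (𝓝 (c' s)) := fun s =>
      ((show Continuous fun f : C(I01, X) => f s by fun_prop).tendsto c').comp hlim
    have hutφ : Tendsto (u ∘ φ) atTop (𝓝 τ) := hut.comp hφ.tendsto_atTop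
    have hc'0 : c' pt0 = p := tendsto_nhds_unique (hev pt0) (by simp [hcp])
    have hc'1 : c' pt1 = q := by
      refine tendsto_nhds_unique (hev pt1) ?_
      simp only [hcq]
      rw [← hγq]
      exact (γ.continuous.tendsto τ).comp hutφ
    have hc'g : IsGeod c' (dist (c' pt0) (c' pt1)) := by
      refine ⟨dist_nonneg, fun s t => ?_⟩
      refine tendsto_nhds_unique ((hev s).dist (hev t)) ?_
      have := ((hev pt0).dist (hev pt1)).mul_const |(s : ℝ) - t|
      refine this.congr fun n => ?_
      rw [(hcM (φ n)).2 s t, aux_geod_len (hcM (φ n))]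
    have hceq : c' = aux_rest γ τ := by
      by_contra hcon
      exact hc ⟨c', aux_rest γ τ, _, _, hc'g, hrgeod, hc'0, hc'1,
        by rw [aux_rest_pt0, h0], by rw [aux_rest_pt1, hγq], hcon⟩
    rw [hceq] at hlim
    have hlim2 : Tendsto (fun n => aux_rest γ (u (φ n))) atTop (𝓝 (aux_rest γ τ)) :=
      ((aux_rest γ).continuous.tendsto τ).comp hutφ
    have e1 : ∀ᶠ n in atTop, c (φ n) ∈ U :=
      (tendsto_nhdsWithin_of_tendsto_nhds_of_eventually_within (s := LocGeodFrom p) _ hlim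
        (Eventually.of_forall fun n => ⟨⟨_, aux_geod_loc (hcM (φ n))⟩, hcp _⟩)).eventually hUn
    have e2 : ∀ᶠ n in atTop, aux_rest γ (u (φ n)) ∈ U :=
      (tendsto_nhdsWithin_of_tendsto_nhds_of_eventually_within (s := LocGeodFrom p) _ hlim2
        (Eventually.of_forall fun n => ⟨⟨_, aux_rest_loc hγ (u (φ n))⟩,
          by rw [aux_rest_pt0, h0]⟩)).eventually hUn
    obtain ⟨n, h1, h2⟩ := (e1.and e2).exists
    have heq : (⟨c (φ n), h1⟩ : U) = ⟨aux_rest γ (u (φ n)), h2⟩ := by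
      apply hemb.injective
      change c (φ n) pt1 = aux_rest γ (u (φ n)) pt1
      rw [hcq, aux_rest_pt1]
    have heq' : c (φ n) = aux_rest γ (u (φ n)) := congrArg Subtype.val heq
    have hg := hcM (φ n)
    rw [heq'] at hg
    exact hud (φ n) (by rw [← hML, aux_speed hg (aux_rest_loc hγ (u (φ n)))])
  refine (iInf_le _ p).trans (sInf_le ⟨aux_rest γ τ, L * τ, hloc, ?_, hconj, ?_⟩)
  · rw [aux_rest_pt0, h0]
  · rw [edist_dist, hd]

/-- In a proper geodesic metric space, if `inj p < conj X` or
`MinRad p < conj X`, then `inj p ≤ MinRad p`. -/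
theorem inj_le_minRad {X : Type*} [MetricSpace X] [ProperSpace X]
    (hgeo : GeodesicSpace X) (p : X)
    (h : inj p < conjSpace X ∨ minRad p < conjSpace X) :
    inj p ≤ minRad p := by
  by_contra hlt
  rw [not_le] at hlt
  have hm : minRad p < conjSpace X := h.elim hlt.trans id
  have hm2 : minRad p < min (inj p) (conjSpace X) := lt_min hlt hm
  unfold minRad at hm2
  simp only [iInf_lt_iff] at hm2
  obtain ⟨q, hq, hlt'⟩ := hm2
  have hc : q ∉ Cut p := fun hqc =>
    absurd (iInf₂_le q hqc : inj p ≤ edist p q) (not_le.2 (hlt'.trans_le (min_le_left _ _)))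
  exact absurd (aux_main hgeo p q hq hc) (not_le.2 (hlt'.trans_le (min_le_right _ _)))

end InjSoul
end
end

section
/- Let X be a proper geodesic metric space that is not compact, fix p₀ ∈ X, and define b : X → ℝ by b(p) = inf over all unit-speed rays c with c(0) = p₀ of b_c(p). Then for every t ∈ ℝ the level set b^{-1}({−t}) equals the topological frontier of the superlevel set C_t = b^{-1}([−t,∞)). -/
open Filter

/-- A unit-speed ray in a metric space: `dist (c s) (c t) = |s - t|` for all `s, t ≥ 0`. -/
def IsUnitSpeedRay {X : Type*} [MetricSpace X] (c : ℝ → X) : Prop :=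
  ∀ s t : ℝ, 0 ≤ s → 0 ≤ t → dist (c s) (c t) = |s - t|

lemma unit_speed_segment {X : Type*} [MetricSpace X]
    (hgeo : ∀ x y : X, ∃ (g : ℝ → X) (L : ℝ), 0 ≤ L ∧
      (∀ s ∈ Set.Icc (0 : ℝ) 1, ∀ t ∈ Set.Icc (0 : ℝ) 1, dist (g s) (g t) = L * |s - t|) ∧
      g 0 = x ∧ g 1 = y) (x y : X) :
    ∃ c : ℝ → X, c 0 = x ∧ c (dist x y) = y ∧
      ∀ s t : ℝ, 0 ≤ s → s ≤ dist x y → 0 ≤ t → t ≤ dist x y → dist (c s) (c t) = |s - t| := by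
  obtain ⟨g, L, hL, hg, h0, h1⟩ := hgeo x y
  have hLd : dist x y = L := by
    have h := hg 0 (by simp) 1 (by simp)
    rw [h0, h1] at h
    simpa using h
  rcases hL.eq_or_lt with h | h
  · have hxy : x = y := by
      rw [← dist_eq_zero, hLd, ← h]
    refine ⟨fun _ => x, rfl, hxy, ?_⟩
    intro s t hs hs' ht ht'
    have e1 : s = 0 := by linarith
    have e2 : t = 0 := by linarith
    simp [e1, e2]
  · refine ⟨fun s => g (s / L), by simp [h0], by simp [hLd, h.ne', h1], ?_⟩
    intro s t hs hs' ht ht'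
    rw [hLd] at hs' ht'
    have := hg (s / L) ⟨by positivity, (div_le_one h).2 hs'⟩ (t / L)
      ⟨by positivity, (div_le_one h).2 ht'⟩
    rw [this, ← sub_div, abs_div, abs_of_pos h]
    field_simp

lemma exists_ray {X : Type*} [MetricSpace X] [ProperSpace X]
    (hgeo : ∀ x y : X, ∃ (g : ℝ → X) (L : ℝ), 0 ≤ L ∧
      (∀ s ∈ Set.Icc (0 : ℝ) 1, ∀ t ∈ Set.Icc (0 : ℝ) 1, dist (g s) (g t) = L * |s - t|) ∧
      g 0 = x ∧ g 1 = y)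
    (hnc : ¬ CompactSpace X) (p₀ : X) : ∃ c : ℝ → X, IsUnitSpeedRay c ∧ c 0 = p₀ := by
  have hfar : ∀ n : ℕ, ∃ y : X, (n : ℝ) ≤ dist p₀ y := by
    intro n
    by_contra! hcon
    apply hnc
    refine ⟨(isCompact_closedBall p₀ (n : ℝ)).of_isClosed_subset isClosed_univ ?_⟩
    intro y _
    rw [Metric.mem_closedBall, dist_comm]
    exact (hcon y).le
  choose y hy using hfar
  choose c hc0 hc1 hc using fun n => unit_speed_segment hgeo p₀ (y n)
  have hev : ∀ s : ℝ, ∀ᶠ n in (hyperfilter ℕ : Filter ℕ), s ≤ dist p₀ (y n) := by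
    intro s
    have h1 : ∀ᶠ n : ℕ in atTop, s ≤ dist p₀ (y n) := by
      filter_upwards [eventually_ge_atTop ⌈s⌉₊] with n hn
      exact (Nat.ceil_le.1 hn).trans (hy n)
    exact Nat.hyperfilter_le_atTop h1
  have hlim : ∀ s : ℝ, ∃ z : X, 0 ≤ s → Tendsto (fun n => c n s) (hyperfilter ℕ) (nhds z) := by
    intro s
    by_cases hs : 0 ≤ s
    · have hmem : Metric.closedBall p₀ s ∈ (hyperfilter ℕ).map (fun n => c n s) := by
        rw [Ultrafilter.mem_map]
        filter_upwards [hev s] with n hn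
        have := hc n s 0 hs hn le_rfl dist_nonneg
        rw [hc0 n] at this
        simp [this, abs_of_nonneg hs]
      obtain ⟨z, -, hz⟩ := (isCompact_closedBall p₀ s).ultrafilter_le_nhds' _ hmem
      exact ⟨z, fun _ => hz⟩
    · exact ⟨p₀, fun h => absurd h hs⟩
  choose d hd using hlim
  refine ⟨d, ?_, ?_⟩
  · intro s t hs ht
    refine tendsto_nhds_unique ((hd s hs).dist (hd t ht)) ?_
    refine tendsto_const_nhds.congr' ?_
    filter_upwards [hev s, hev t] with n h1 h2
    exact (hc n s t hs h1 ht h2).symm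
  · refine tendsto_nhds_unique (hd 0 le_rfl) ?_
    simp only [hc0]
    exact tendsto_const_nhds

/-- Let `X` be a proper geodesic noncompact metric space, `p₀ ∈ X`, and let
`b` be the infimum over all unit-speed rays `c` with `c 0 = p₀` of the Busemann functions
`b_c`.  Then for every `t ∈ ℝ` the level set `b ⁻¹ {-t}` equals the topological frontier of
the superlevel set `C_t = b ⁻¹ [-t,∞)`. -/
theorem busemann_level_eq_frontier {X : Type*} [MetricSpace X] [ProperSpace X]
    (hgeo : ∀ x y : X, ∃ (g : ℝ → X) (L : ℝ), 0 ≤ L ∧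
      (∀ s ∈ Set.Icc (0 : ℝ) 1, ∀ t ∈ Set.Icc (0 : ℝ) 1, dist (g s) (g t) = L * |s - t|) ∧
      g 0 = x ∧ g 1 = y)
    (hnc : ¬ CompactSpace X) (p₀ : X)
    (busemann : (ℝ → X) → X → ℝ)
    (hbus : ∀ c : ℝ → X, IsUnitSpeedRay c → ∀ q : X,
      Tendsto (fun t => dist q (c t) - t) atTop (nhds (busemann c q)))
    (b : X → ℝ)
    (hb : ∀ p : X, b p = sInf {v | ∃ c : ℝ → X, IsUnitSpeedRay c ∧ c 0 = p₀ ∧ v = busemann c p})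
    (t : ℝ) :
    b ⁻¹' {-t} = frontier (b ⁻¹' Set.Ici (-t)) := by
  have hne : ∀ p, {v | ∃ c : ℝ → X, IsUnitSpeedRay c ∧ c 0 = p₀ ∧ v = busemann c p}.Nonempty := by
    intro p
    obtain ⟨c, hc, hc0⟩ := exists_ray hgeo hnc p₀
    exact ⟨_, c, hc, hc0, rfl⟩
  have hbd : ∀ p, BddBelow {v | ∃ c : ℝ → X, IsUnitSpeedRay c ∧ c 0 = p₀ ∧ v = busemann c p} := by
    intro p
    refine ⟨-dist p p₀, ?_⟩
    rintro v ⟨c, hc, hc0, rfl⟩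
    refine ge_of_tendsto (hbus c hc p) ?_
    filter_upwards [eventually_ge_atTop 0] with u hu
    have h1 := hc 0 u le_rfl hu
    rw [hc0, zero_sub, abs_neg, abs_of_nonneg hu] at h1
    have h2 := dist_triangle p₀ p (c u)
    rw [dist_comm p₀ p] at h2
    linarith
  have hble : ∀ c, IsUnitSpeedRay c → c 0 = p₀ → ∀ p, b p ≤ busemann c p := by
    intro c hc hc0 p
    rw [hb p]
    exact csInf_le (hbd p) ⟨c, hc, hc0, rfl⟩
  have hlip : ∀ p q, b p ≤ b q + dist p q := by
    intro p q
    rw [← sub_le_iff_le_add, hb q]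
    refine le_csInf (hne q) ?_
    rintro v ⟨c, hc, hc0, rfl⟩
    have h1 : busemann c p ≤ busemann c q + dist p q := by
      refine le_of_tendsto_of_tendsto' (hbus c hc p) ((hbus c hc q).add_const _) ?_
      intro u
      have := dist_triangle p q (c u)
      linarith
    linarith [hble c hc hc0 p]
  have hcont : Continuous b := (LipschitzWith.of_le_add hlip).continuous
  have hmono : ∀ c, IsUnitSpeedRay c → ∀ q T, 0 ≤ T → busemann c q ≤ dist q (c T) - T := by
    intro c hc q T hT
    refine le_of_tendsto (hbus c hc q) ?_
    filter_upwards [eventually_ge_atTop T] with u hu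
    have h1 := hc T u hT (hT.trans hu)
    rw [abs_sub_comm, abs_of_nonneg (sub_nonneg.2 hu)] at h1
    have h2 := dist_triangle q (c T) (c u)
    linarith
  have hdesc : ∀ p s, 0 < s → ∃ q, dist q p = s ∧ b q < b p := by
    intro p s hs
    obtain ⟨v, ⟨c, hc, hc0, rfl⟩, hv⟩ := exists_lt_of_csInf_lt (hne p)
      (show sInf _ < b p + s / 3 by rw [← hb p]; linarith)
    have e1 : ∀ᶠ u in atTop, dist p (c u) - u < b p + s / 3 + s / 3 :=
      (hbus c hc p).eventually_lt_const (by linarith)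
    obtain ⟨T, hT1, hT2⟩ := (e1.and (eventually_ge_atTop (s + dist p p₀))).exists
    have hT0 : 0 ≤ T := by linarith [dist_nonneg (x := p) (y := p₀)]
    have h1 := hc 0 T le_rfl hT0
    rw [hc0, zero_sub, abs_neg, abs_of_nonneg hT0] at h1
    have h2 := dist_triangle p₀ p (c T)
    rw [dist_comm p₀ p] at h2
    have hsd : s ≤ dist p (c T) := by linarith
    obtain ⟨g, hg0, hg1, hg⟩ := unit_speed_segment hgeo p (c T)
    refine ⟨g s, ?_, ?_⟩
    · have := hg s 0 hs.le hsd le_rfl dist_nonneg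
      rw [hg0] at this
      simpa [abs_of_pos hs] using this
    · have h3 := hg s (dist p (c T)) hs.le hsd dist_nonneg le_rfl
      rw [hg1, abs_sub_comm, abs_of_nonneg (sub_nonneg.2 hsd)] at h3
      have h4 := hmono c hc (g s) T hT0
      have h5 := hble c hc hc0 (g s)
      linarith
  have hclosed : IsClosed (b ⁻¹' Set.Ici (-t)) := isClosed_Ici.preimage hcont
  ext p
  rw [hclosed.frontier_eq]
  constructor
  · intro hp
    have hp' : b p = -t := hp
    refine ⟨hp'.ge, ?_⟩
    intro hint
    obtain ⟨ε, hε, hball⟩ := Metric.mem_nhds_iff.1 (mem_interior_iff_mem_nhds.1 hint)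
    obtain ⟨q, hq, hbq⟩ := hdesc p (ε / 2) (by positivity)
    have hq' : -t ≤ b q := hball (by rw [Metric.mem_ball, hq]; linarith)
    linarith
  · rintro ⟨hp, hint⟩
    have hp' : -t ≤ b p := hp
    refine le_antisymm ?_ hp'
    by_contra! hlt
    apply hint
    exact interior_maximal (Set.preimage_mono Set.Ioi_subset_Ici_self)
      (isOpen_Ioi.preimage hcont) hlt
end

section
/- (Generalized Rolle's theorem.) Let f : [a,b] → ℝ be continuous with f(a) = f(b) = 0, and suppose that at every x ∈ (a,b] the left derivative f⁻(x) = lim_{h→0⁺} (f(x) − f(x−h))/h exists. Then there exist c, d ∈ (a,b] such that f⁻(c) ≤ 0 ≤ f⁻(d). -/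
open Filter

lemma rolle_aux (a b : ℝ) (hab : a < b) (f : ℝ → ℝ) (f' : ℝ → ℝ)
    (hcont : ContinuousOn f (Set.Icc a b)) (ha : f a = 0) (hb : f b = 0)
    (hder : ∀ x ∈ Set.Ioc a b,
      Tendsto (fun h => (f x - f (x - h)) / h) (nhdsWithin 0 (Set.Ioi 0)) (nhds (f' x))) :
    ∃ d ∈ Set.Ioc a b, 0 ≤ f' d := by
  obtain ⟨d, hd, hmax⟩ : ∃ d ∈ Set.Ioc a b, ∀ y ∈ Set.Icc a b, f y ≤ f d := by
    obtain ⟨x, hx, hm⟩ := isCompact_Icc.exists_isMaxOn (Set.nonempty_Icc.2 hab.le) hcont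
    rcases hx.1.eq_or_lt with h | h
    · refine ⟨b, ⟨hab, le_rfl⟩, fun y hy => ?_⟩
      have h1 : f y ≤ f x := hm hy
      rw [← h, ha] at h1
      rwa [hb]
    · exact ⟨x, ⟨h, hx.2⟩, fun y hy => hm hy⟩
  refine ⟨d, hd, ge_of_tendsto (hder d hd) ?_⟩
  have hpos : 0 < d - a := sub_pos.2 hd.1
  filter_upwards [Ioo_mem_nhdsGT hpos] with h hh
  have h2 := hmax (d - h) ⟨by linarith [hh.2], by linarith [hh.1, hd.2]⟩
  exact div_nonneg (by linarith) hh.1.le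

/-- **generalized Rolle's theorem.** Let `f : [a,b] → ℝ` be continuous with
`f a = f b = 0`, admitting at every `x ∈ (a,b]` a left derivative
`f⁻(x) = lim_{h→0⁺} (f x - f (x - h))/h`.  Then there are `c, d ∈ (a,b]` with
`f⁻(c) ≤ 0 ≤ f⁻(d)`. -/
theorem rolle_left_deriv (a b : ℝ) (hab : a < b) (f : ℝ → ℝ) (f' : ℝ → ℝ)
    (hcont : ContinuousOn f (Set.Icc a b)) (ha : f a = 0) (hb : f b = 0)
    (hder : ∀ x ∈ Set.Ioc a b,
      Tendsto (fun h => (f x - f (x - h)) / h) (nhdsWithin 0 (Set.Ioi 0)) (nhds (f' x))) :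
    ∃ c ∈ Set.Ioc a b, ∃ d ∈ Set.Ioc a b, f' c ≤ 0 ∧ 0 ≤ f' d := by
  obtain ⟨d, hd, hd'⟩ := rolle_aux a b hab f f' hcont ha hb hder
  obtain ⟨c, hc, hc'⟩ := rolle_aux a b hab (fun x => -f x) (fun x => -f' x) hcont.neg
    (by simp [ha]) (by simp [hb]) (fun x hx => by
      refine (hder x hx).neg.congr fun h => ?_
      ring)
  exact ⟨c, hc, d, hd, by linarith, hd'⟩
end
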